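/- Let 0 ≤ k < d be integers and let {x_u : u ∈ {0,1}^k} be a family of non-negative real numbers such that x_u ≥ x_v whenever v_i ≥ u_i for all i. Then for every integer 0 ≤ s < k, one has X_s ≥ ((s+1)/(k−s)) · X_{s+1}. -/

import Mathlib

/-!
Double counting along the edges of the Hamming cube. Every `u` with `|u| = s` has `k - s` zero
coordinates and every `v` with `|v| = s + 1` has `s + 1` coordinates equal to one, so
`(k - s) X_s` and `(s + 1) X_{s+1}` are both sums over the edges between the two levels, each edge
contributing the value at its lower, respectively upper, endpoint. By monotonicity the lower
endpoint contributes at least as much. In `edge_sum_le` the comparison is made separately for the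
edges in each coordinate direction `i`, which are matched by resetting the coordinate `i` to zero.
-/


/-- The set `{0,1,…,n-1}^k` as a finset of functions `Fin k → ℕ`. -/
def cube (k n : ℕ) : Finset (Fin k → ℕ) :=
  Fintype.piFinset fun _ => Finset.range n

/-- `X_s = ∑_{u ∈ {0,1}^k, |u| = s} x_u^{d-k}`. -/
noncomputable def Xsum (d k : ℕ) (x : (Fin k → ℕ) → ℝ) (s : ℕ) : ℝ :=
  ∑ u ∈ (cube k 2).filter (fun u => ∑ i, u i = s), x u ^ (d - k)

/-- The level `|u| = s` of the cube `{0,1}^k`. -/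
def level (k s : ℕ) : Finset (Fin k → ℕ) :=
  (cube k 2).filter (fun u => ∑ i, u i = s)

lemma mem_level {k s : ℕ} {u : Fin k → ℕ} :
    u ∈ level k s ↔ (∀ i, u i ≤ 1) ∧ ∑ i, u i = s := by
  simp [level, cube, Fintype.mem_piFinset, Nat.lt_succ_iff]

lemma sum_update_add {k : ℕ} (u : Fin k → ℕ) (i : Fin k) (a : ℕ) :
    (∑ j, Function.update u i a j) + u i = a + ∑ j, u j := by
  rw [Finset.sum_update_of_mem (Finset.mem_univ i),
    Finset.sum_eq_add_sum_sdiff_singleton_of_mem (Finset.mem_univ i) u]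
  ring

lemma update_le_one {k : ℕ} {u : Fin k → ℕ} (hu : ∀ j, u j ≤ 1) (i : Fin k) {a : ℕ}
    (ha : a ≤ 1) (j : Fin k) : Function.update u i a j ≤ 1 := by
  rcases eq_or_ne j i with rfl | h
  · simpa using ha
  · simpa [h] using hu j

/-- Over the edges in direction `i` between the levels `s` and `s + 1`, the sum of an antitone
function at the upper endpoints is at most its sum at the lower endpoints. The weights `v i` and
`1 - u i` select the vertices that are endpoints of such edges. -/
lemma edge_sum_le {k : ℕ} (f : (Fin k → ℕ) → ℝ)
    (hf : ∀ u v : Fin k → ℕ, (∀ i, u i ≤ 1) → (∀ i, v i ≤ 1) →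
      (∀ i, u i ≤ v i) → f v ≤ f u)
    (s : ℕ) (i : Fin k) :
    ∑ v ∈ level k (s + 1), (v i : ℝ) * f v ≤ ∑ u ∈ level k s, (1 - (u i : ℝ)) * f u := by
  have hup : ∑ v ∈ level k (s + 1), (v i : ℝ) * f v
      = ∑ v ∈ (level k (s + 1)).filter (fun v => v i = 1), f v := by
    rw [Finset.sum_filter]
    refine Finset.sum_congr rfl fun v hv => ?_
    have := (mem_level.1 hv).1 i
    interval_cases h : v i <;> simp
  have hdown : ∑ u ∈ level k s, (1 - (u i : ℝ)) * f u
      = ∑ u ∈ (level k s).filter (fun u => u i = 0), f u := by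
    rw [Finset.sum_filter]
    refine Finset.sum_congr rfl fun u hu => ?_
    have := (mem_level.1 hu).1 i
    interval_cases h : u i <;> simp
  rw [hup, hdown]
  calc ∑ v ∈ (level k (s + 1)).filter (fun v => v i = 1), f v
      ≤ ∑ v ∈ (level k (s + 1)).filter (fun v => v i = 1), f (Function.update v i 0) := by
        refine Finset.sum_le_sum fun v hv => ?_
        have h1 := (mem_level.1 (Finset.mem_filter.1 hv).1).1
        refine hf _ _ (update_le_one h1 i zero_le_one) h1 fun j => ?_
        rcases eq_or_ne j i with rfl | h
        · simp
        · simp [h]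
    _ = ∑ u ∈ (level k s).filter (fun u => u i = 0), f u := by
        refine Finset.sum_bij' (fun v _ => Function.update v i 0)
          (fun u _ => Function.update u i 1) ?_ ?_ ?_ ?_ ?_
        · intro v hv
          obtain ⟨hv, hi⟩ := Finset.mem_filter.1 hv
          obtain ⟨h1, h2⟩ := mem_level.1 hv
          have := sum_update_add v i 0
          exact Finset.mem_filter.2
            ⟨mem_level.2 ⟨update_le_one h1 i zero_le_one, by omega⟩, by simp⟩
        · intro u hu
          obtain ⟨hu, hi⟩ := Finset.mem_filter.1 hu
          obtain ⟨h1, h2⟩ := mem_level.1 hu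
          have := sum_update_add u i 1
          exact Finset.mem_filter.2
            ⟨mem_level.2 ⟨update_le_one h1 i le_rfl, by omega⟩, by simp⟩
        · intro v hv
          simp [← (Finset.mem_filter.1 hv).2]
        · intro u hu
          simp [← (Finset.mem_filter.1 hu).2]
        · intro v hv
          rfl

/-- Redistribution: `X_s ≥ ((s+1)/(k-s)) X_{s+1}` for `0 ≤ s < k`. -/
theorem stmt6 (d k : ℕ) (hkd : k < d)
    (x : (Fin k → ℕ) → ℝ)
    (hx : ∀ u, (∀ i, u i ≤ 1) → 0 ≤ x u)
    (hmono : ∀ u v : Fin k → ℕ, (∀ i, u i ≤ 1) → (∀ i, v i ≤ 1) →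
      (∀ i, u i ≤ v i) → x v ≤ x u)
    (s : ℕ) (hs : s < k) :
    Xsum d k x s ≥ (((s : ℝ) + 1) / ((k : ℝ) - (s : ℝ))) * Xsum d k x (s + 1) := by
  have hf : ∀ u v : Fin k → ℕ, (∀ i, u i ≤ 1) → (∀ i, v i ≤ 1) →
      (∀ i, u i ≤ v i) → x v ^ (d - k) ≤ x u ^ (d - k) :=
    fun u v hu hv huv => pow_le_pow_left₀ (hx v hv) (hmono u v hu hv huv) _
  have hsum : ∀ {t : ℕ} {u : Fin k → ℕ}, u ∈ level k t → ∑ i, (u i : ℝ) = t := by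
    intro t u hu
    exact_mod_cast (mem_level.1 hu).2
  have hup : ((s : ℝ) + 1) * Xsum d k x (s + 1)
      = ∑ i, ∑ v ∈ level k (s + 1), (v i : ℝ) * x v ^ (d - k) := by
    rw [Finset.sum_comm, Xsum, Finset.mul_sum]
    refine Finset.sum_congr rfl fun v hv => ?_
    rw [← Finset.sum_mul, hsum hv]
    push_cast
    rfl
  have hdown : ((k : ℝ) - s) * Xsum d k x s
      = ∑ i, ∑ u ∈ level k s, (1 - (u i : ℝ)) * x u ^ (d - k) := by
    rw [Finset.sum_comm, Xsum, Finset.mul_sum]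
    refine Finset.sum_congr rfl fun u hu => ?_
    rw [← Finset.sum_mul, Finset.sum_sub_distrib, hsum hu]
    simp
  have key : ((s : ℝ) + 1) * Xsum d k x (s + 1) ≤ ((k : ℝ) - s) * Xsum d k x s := by
    rw [hup, hdown]
    exact Finset.sum_le_sum fun i _ => edge_sum_le _ hf s i
  have hpos : (0 : ℝ) < (k : ℝ) - s := sub_pos.2 (by exact_mod_cast hs)
  rw [ge_iff_le, div_mul_eq_mul_div, div_le_iff₀ hpos]
  linarith
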